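/- arXiv:math-ph/0311041 — 2 statements merged into one kernel-verified Lean document; each statement's English description precedes it below -/
import Mathlib

section
/- Assume n ≤ m. For every integer i with 1 ≤ i ≤ 2N−1 and i ≠ N there exist complex numbers a₀,…,a_{m+n} with a₀ = 1 such that both polynomials q¹ᵢ = ∑_{s=0}^{m+n} aₛ·z^{(m+n−s)N+i}·w^{Ns} and q²ᵢ = ∑_{s=0}^{m+n} \overline{aₛ}·w^{(m+n−s)N+i}·z^{Ns} are quasi-invariants of the dihedral system I₂(2N) with multiplicities (m,n). -/
open MvPolynomial Finset

noncomputable section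

/-- The polynomial ring `R = ℂ[z,w]`. -/
abbrev R2 : Type := MvPolynomial (Fin 2) ℂ

/-- `z`, the first variable. -/
def zP : R2 := X 0

/-- `w`, the second variable (playing the role of `z̄`). -/
def wP : R2 := X 1

/-- `ε = exp(πi/N)`, a primitive `2N`-th root of unity. -/
def eps (N : ℕ) : ℂ := Complex.exp ((Real.pi : ℂ) * Complex.I / (N : ℂ))

/-- The reflection `σⱼ : z ↦ ε^j w, w ↦ ε^{-j} z` as a `ℂ`-algebra endomorphism. -/
def dihRefl (N j : ℕ) : R2 →ₐ[ℂ] R2 :=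
  aeval (fun k : Fin 2 => if k = 0 then C (eps N ^ j) * X 1 else C (eps N ^ (-(j : ℤ))) * X 0)

/-- The multiplicity `mⱼ`: `m` for even `j`, `n` for odd `j`. -/
def mult (m n j : ℕ) : ℕ := if Even j then m else n

/-- Quasi-invariance for the dihedral system `I₂(2N)` with multiplicities `(m,n)`. -/
def IsQuasiInv (N m n : ℕ) (p : R2) : Prop :=
  ∀ j < 2 * N, (zP - C (eps N ^ j) * wP) ^ (2 * mult m n j + 1) ∣ dihRefl N j p - p

/-
Put `P = ∑ aₛ Tˢ`, `D = (m + n) N + i` and `y = D / (2N)`. With `z = T · ε^j w`, divisibility of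
`q¹ᵢ - σⱼ q¹ᵢ` by `(z - ε^j w)^(2μ+1)` becomes divisibility of
`∑ aₛ τˢ (T^(D - N s) - T^(N s))`, `τ = (-1)^j`, by `(T - 1)^(2μ+1)`. Since `N s` and `D - N s` are
exchanged by `y - s ↦ -(y - s)`, the Taylor coefficients at `1` of order at most `2μ` are
combinations of the odd moments `∑ aₛ τˢ (y - s)^(2k+1)`, `k < μ`, so it suffices that these vanish.

These are `m` conditions at `τ = 1` and `n` at `τ = -1` on `m + n + 1` coefficients, so a solution
with `a₀ = 1` exists once a solution with `a₀ = 0` must be zero. If `m, n > 0`, the conditions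
`k = 0` say that `(y - T d/dT) P` vanishes at `±1`, so it equals `(T² - 1) Q`. Multiplication by
`T² - 1` is dual to taking central differences of the test function, whence `Q` satisfies the
conditions for `(y - 1, m - 1, n - 1)` and vanishes by induction. If `m = 0` or `n = 0`, the
conditions form a Vandermonde system in the nodes `(y - s)²`, which are distinct because `2y` is not
an integer.

The `aₛ` come out rational, so `q²ᵢ = σ₀ q¹ᵢ`, and `σ₀` preserves quasi-invariance.
-/

section Reflections

theorem eps_ne_zero (N : ℕ) : eps N ≠ 0 := Complex.exp_ne_zero _

theorem eps_pow_self {N : ℕ} (hN : N ≠ 0) : eps N ^ N = -1 := by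
  rw [eps, ← Complex.exp_nat_mul, mul_div_cancel₀ _ (Nat.cast_ne_zero.2 hN), Complex.exp_pi_mul_I]

theorem eps_pow_pow_self {N : ℕ} (hN : N ≠ 0) (j : ℕ) : (eps N ^ j) ^ N = (-1) ^ j := by
  rw [pow_right_comm, eps_pow_self hN]

theorem dihRefl_C (N j : ℕ) (a : ℂ) : dihRefl N j (C a) = C a :=
  algHom_C _ a

theorem dihRefl_zP (N j : ℕ) : dihRefl N j zP = C (eps N ^ j) * wP := by
  simp [dihRefl, zP, wP]

theorem dihRefl_wP (N j : ℕ) : dihRefl N j wP = C (eps N ^ j)⁻¹ * zP := by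
  simp [dihRefl, zP, wP]

theorem dihRefl_zero_zP (N : ℕ) : dihRefl N 0 zP = wP := by
  rw [dihRefl_zP, pow_zero, C_1, one_mul]

theorem dihRefl_zero_wP (N : ℕ) : dihRefl N 0 wP = zP := by
  rw [dihRefl_wP, pow_zero, inv_one, C_1, one_mul]

theorem dihRefl_dihRefl_zero {N j k : ℕ} (h : eps N ^ k = (eps N ^ j)⁻¹) (p : R2) :
    dihRefl N j (dihRefl N 0 p) = dihRefl N 0 (dihRefl N k p) := by
  have hz : dihRefl N j (dihRefl N 0 zP) = dihRefl N 0 (dihRefl N k zP) := by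
    rw [dihRefl_zero_zP, dihRefl_zP, dihRefl_wP, map_mul, dihRefl_zero_wP, dihRefl_C, h]
  have hw : dihRefl N j (dihRefl N 0 wP) = dihRefl N 0 (dihRefl N k wP) := by
    rw [dihRefl_zero_wP, dihRefl_zP, dihRefl_wP, map_mul, dihRefl_zero_zP, dihRefl_C, h, inv_inv]
  have hcomp : (dihRefl N j).comp (dihRefl N 0) = (dihRefl N 0).comp (dihRefl N k) :=
    algHom_ext (Fin.forall_fin_two.2 ⟨hz, hw⟩)
  exact DFunLike.congr_fun hcomp p

theorem exists_eps_pow_eq_inv (m n : ℕ) {N j : ℕ} (hj : j < 2 * N) :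
    ∃ k < 2 * N, eps N ^ k = (eps N ^ j)⁻¹ ∧ mult m n k = mult m n j := by
  rcases Nat.eq_zero_or_pos j with rfl | hpos
  · exact ⟨0, hj, by rw [pow_zero, inv_one], rfl⟩
  · refine ⟨2 * N - j, by omega, eq_inv_of_mul_eq_one_left ?_, ?_⟩
    · rw [← pow_add, Nat.sub_add_cancel hj.le, mul_comm, pow_mul, eps_pow_self (by omega),
        neg_one_sq]
    · simp only [mult, Nat.even_sub hj.le, even_two_mul, true_iff]

theorem IsQuasiInv.dihRefl_zero {N m n : ℕ} {p : R2} (hp : IsQuasiInv N m n p) :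
    IsQuasiInv N m n (dihRefl N 0 p) := by
  intro j hj
  obtain ⟨k, hk, hkj, hmult⟩ := exists_eps_pow_eq_inv m n hj
  have hdvd := map_dvd (dihRefl N 0) (hp k hk)
  rw [map_pow, map_sub, map_sub, map_mul, dihRefl_zero_zP, dihRefl_zero_wP, dihRefl_C, hkj,
    hmult, ← dihRefl_dihRefl_zero hkj] at hdvd
  have hunit : (C (eps N ^ j) * C (eps N ^ j)⁻¹ : R2) = 1 := by
    rw [← C_mul, mul_inv_cancel₀ (pow_ne_zero j (eps_ne_zero N)), C_1]
  refine (pow_dvd_pow_of_dvd ⟨-C (eps N ^ j)⁻¹, ?_⟩ _).trans hdvd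
  linear_combination (-wP) * hunit

theorem sub_dihRefl_C_mul_zP_pow_mul_wP_pow {N j b : ℕ} {τ : ℂ} (hτ : τ ^ 2 = 1)
    (hb : (eps N ^ j) ^ b = τ) (c : ℂ) (a : ℕ) :
    C c * zP ^ a * wP ^ b - dihRefl N j (C c * zP ^ a * wP ^ b) =
      C (c * τ) * (zP ^ a * (C (eps N ^ j) * wP) ^ b - zP ^ b * (C (eps N ^ j) * wP) ^ a) := by
  have hpow : (C (eps N ^ j) : R2) ^ b = C τ := by rw [← C_pow, hb]
  have hpow_inv : (C (eps N ^ j)⁻¹ : R2) ^ b = C τ := by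
    rw [← C_pow, inv_pow, hb, inv_eq_of_mul_eq_one_left (sq τ ▸ hτ)]
  have hsq : (C τ ^ 2 : R2) = 1 := by rw [← C_pow, hτ, C_1]
  simp only [map_mul, map_pow (dihRefl N j), dihRefl_C, dihRefl_zP, dihRefl_wP, mul_pow, hpow,
    hpow_inv]
  linear_combination (-C c * zP ^ a * wP ^ b) * hsq

end Reflections

namespace DihedralQuasiInvariants

open Polynomial

local notation "T" => Polynomial.X

section OddPowers

variable {R : Type*} [CommRing R]

/-- The odd-moment condition `ℓ(T) = ℓ(T³) = ⋯ = ℓ(T^(2μ-1)) = 0`, i.e. the functional `ℓ`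
annihilates the odd polynomials of degree less than `2μ`. -/
def VanishesOnOddPowers (ℓ : R[X] →ₗ[R] R) (μ : ℕ) : Prop :=
  ∀ k < μ, ℓ (T ^ (2 * k + 1)) = 0

theorem sum_range_two_mul_add_one_of_even_eq_zero {M : Type*} [AddCommMonoid M] {g : ℕ → M}
    (hg : ∀ j, g (2 * j) = 0) (n : ℕ) :
    ∑ i ∈ range (2 * n + 1), g i = ∑ j ∈ range n, g (2 * j + 1) := by
  induction n with
  | zero => simpa using hg 0
  | succ n ih =>
    rw [mul_add_one, sum_range_succ, sum_range_succ, ih, sum_range_succ, ← mul_add_one, hg,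
      add_zero]

theorem sub_comp_neg_X_eq_sum_odd {f : R[X]} {n : ℕ} (hf : f.natDegree < 2 * n + 1) :
    f - f.comp (-T) = ∑ j ∈ range n, (2 * f.coeff (2 * j + 1)) • (T : R[X]) ^ (2 * j + 1) := by
  have hcomp : f - f.comp (-T) =
      ∑ i ∈ range (2 * n + 1), f.coeff i • ((T : R[X]) ^ i - (-T) ^ i) := by
    simp only [smul_sub, sum_sub_distrib, Polynomial.smul_eq_C_mul]
    rw [← f.as_sum_range_C_mul_X_pow' hf, comp, eval₂_eq_sum_range' _ hf]
  rw [hcomp, sum_range_two_mul_add_one_of_even_eq_zero]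
  · refine sum_congr rfl fun j _ => ?_
    rw [(odd_two_mul_add_one j).neg_pow, sub_neg_eq_add, ← two_smul R, smul_smul, mul_comm]
  · intro j
    rw [(even_two_mul j).neg_pow, sub_self, smul_zero]

theorem VanishesOnOddPowers.apply_sub_comp_neg_X {ℓ : R[X] →ₗ[R] R} {μ : ℕ}
    (hℓ : VanishesOnOddPowers ℓ μ) {f : R[X]} (hf : f.natDegree < 2 * μ + 1) :
    ℓ (f - f.comp (-T)) = 0 := by
  rw [sub_comp_neg_X_eq_sum_odd hf, map_sum]
  refine sum_eq_zero fun j hj => ?_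
  rw [map_smul, hℓ j (mem_range.1 hj), smul_zero]

theorem X_add_one_pow_sub_X_sub_one_pow [Nontrivial R] (k : ℕ) :
    ((T + 1) ^ (2 * k) - (T - 1) ^ (2 * k) : R[X]) =
      ∑ j ∈ range k, (2 * ((2 * k).choose (2 * j + 1) : R)) • (T : R[X]) ^ (2 * j + 1) := by
  have hdeg : ((T + 1 : R[X]) ^ (2 * k)).natDegree < 2 * k + 1 := by
    rw [← Polynomial.C_1, natDegree_pow_X_add_C]
    exact Nat.lt_succ_self _
  have hneg : ((T + 1 : R[X]) ^ (2 * k)).comp (-T) = (T - 1) ^ (2 * k) := by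
    rw [pow_comp, ← (even_two_mul k).neg_pow (T - 1), add_comp, X_comp, one_comp, neg_sub,
      sub_eq_neg_add]
  simpa only [hneg, coeff_X_add_one_pow] using sub_comp_neg_X_eq_sum_odd hdeg

theorem VanishesOnOddPowers.of_centralDifference [IsDomain R] [CharZero R] {ℓ : R[X] →ₗ[R] R}
    {μ : ℕ} (h : ∀ k ≤ μ, ℓ ((T + 1) ^ (2 * k) - (T - 1) ^ (2 * k)) = 0) :
    VanishesOnOddPowers ℓ μ := by
  intro k hk
  induction k using Nat.strong_induction_on with
  | _ k ih =>
    have hk1 := h (k + 1) hk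
    rw [X_add_one_pow_sub_X_sub_one_pow, sum_range_succ, map_add, map_sum, sum_eq_zero, zero_add,
      map_smul, smul_eq_mul] at hk1
    · refine (mul_eq_zero.1 hk1).resolve_left (mul_ne_zero two_ne_zero ?_)
      exact Nat.cast_ne_zero.2 (Nat.choose_pos (by omega)).ne'
    · intro j hj
      have hjk := mem_range.1 hj
      rw [map_smul, ih j hjk (hjk.trans hk), smul_zero]

end OddPowers

section ShiftSum

variable {R : Type*} [CommRing R]

/-- The pairing `∑ₛ Pₛ τˢ f(y - s)` of a coefficient polynomial `P` with a test function `f`: the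
value at `y` of `P(τ E⁻¹) f`, where `E` is the shift `f ↦ f(· + 1)`. -/
def shiftSum (y τ : R) : R[X] →ₗ[R] R[X] →ₗ[R] R :=
  lsum fun s => LinearMap.toSpanSingleton R _ (τ ^ s • leval (y - s))

theorem shiftSum_monomial (y τ a : R) (s : ℕ) (f : R[X]) :
    shiftSum y τ (monomial s a) f = a * (τ ^ s * f.eval (y - s)) := by
  simp [shiftSum, lsum_apply, sum_monomial_index]

theorem shiftSum_apply (y τ : R) {P : R[X]} {n : ℕ} (hP : P.natDegree < n) (f : R[X]) :
    shiftSum y τ P f = ∑ s ∈ range n, P.coeff s * (τ ^ s * f.eval (y - s)) := by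
  conv_lhs => rw [P.as_sum_range' n hP]
  simp only [map_sum, LinearMap.sum_apply, shiftSum_monomial]

theorem shiftSum_X_sq_sub_one_mul (y : R) {τ : R} (hτ : τ ^ 2 = 1) (P f : R[X]) :
    shiftSum y τ ((T ^ 2 - 1) * P) f =
      shiftSum (y - 1) τ P (f.comp (T - 1) - f.comp (T + 1)) := by
  induction P using Polynomial.induction_on' with
  | add P Q hP hQ => simp only [mul_add, map_add, LinearMap.add_apply, hP, hQ]
  | monomial s a =>
    rw [sub_one_mul, X_pow_mul_monomial, map_sub, LinearMap.sub_apply]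
    simp only [shiftSum_monomial, Polynomial.eval_sub, Polynomial.eval_add, eval_comp,
      Polynomial.eval_X, eval_one]
    rw [pow_add, hτ]
    push_cast
    ring_nf

/-- The Euler operator `y - T d/dT`, which multiplies `Tˢ` by `y - s`. Under `shiftSum y τ` it is
dual to multiplication of the test function by `T`. -/
def eulerOp (y : R) (P : R[X]) : R[X] := y • P - T * derivative P

theorem coeff_eulerOp (y : R) (P : R[X]) (s : ℕ) :
    (eulerOp y P).coeff s = (y - s) * P.coeff s := by
  cases s with
  | zero => simp [eulerOp]
  | succ s =>
    rw [eulerOp, Polynomial.coeff_sub, Polynomial.coeff_smul, smul_eq_mul,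
      Polynomial.coeff_X_mul, coeff_derivative]
    push_cast
    ring

theorem natDegree_eulerOp_le (y : R) (P : R[X]) : (eulerOp y P).natDegree ≤ P.natDegree := by
  refine natDegree_le_iff_coeff_eq_zero.2 fun s hs => ?_
  rw [coeff_eulerOp, coeff_eq_zero_of_natDegree_lt hs, mul_zero]

theorem eulerOp_eq_zero_iff [NoZeroDivisors R] {y : R} (hy : ∀ s : ℕ, y ≠ s) {P : R[X]} :
    eulerOp y P = 0 ↔ P = 0 := by
  simp only [Polynomial.ext_iff, coeff_eulerOp, Polynomial.coeff_zero, mul_eq_zero, sub_eq_zero,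
    hy, false_or]

theorem shiftSum_eulerOp (y τ : R) (P f : R[X]) :
    shiftSum y τ (eulerOp y P) f = shiftSum y τ P (T * f) := by
  rw [shiftSum_apply y τ (Nat.lt_succ_of_le (natDegree_eulerOp_le y P)),
    shiftSum_apply y τ P.natDegree.lt_succ_self]
  refine sum_congr rfl fun s _ => ?_
  rw [coeff_eulerOp, Polynomial.eval_mul, Polynomial.eval_X]
  ring

theorem shiftSum_one (y τ : R) (P : R[X]) : shiftSum y τ P 1 = P.eval τ := by
  rw [shiftSum_apply y τ P.natDegree.lt_succ_self, eval_eq_sum_range]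
  simp only [eval_one, mul_one]

theorem X_sq_sub_one_dvd (hunit : IsUnit (2 : R)) {P : R[X]} (hpos : P.IsRoot 1)
    (hneg : P.IsRoot (-1)) : T ^ 2 - 1 ∣ P := by
  have hfactor : (T ^ 2 - 1 : R[X]) = (T - Polynomial.C 1) * (T - Polynomial.C (-1)) := by
    rw [map_neg, map_one]
    ring
  rw [hfactor]
  refine (isCoprime_X_sub_C_of_isUnit_sub ?_).mul_dvd (dvd_iff_isRoot.2 hpos)
    (dvd_iff_isRoot.2 hneg)
  rwa [sub_neg_eq_add, one_add_one_eq_two]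

theorem VanishesOnOddPowers.isRoot_eulerOp {y τ : R} {P : R[X]} {μ : ℕ} (hμ : 0 < μ)
    (h : VanishesOnOddPowers (shiftSum y τ P) μ) : (eulerOp y P).IsRoot τ := by
  rw [IsRoot, ← shiftSum_one y, shiftSum_eulerOp, mul_one]
  simpa using h 0 hμ

theorem VanishesOnOddPowers.of_eulerOp_eq [IsDomain R] [CharZero R] {y τ : R} (hτ : τ ^ 2 = 1)
    {P Q : R[X]} (hQ : eulerOp y P = (T ^ 2 - 1) * Q) {μ : ℕ}
    (h : VanishesOnOddPowers (shiftSum y τ P) (μ + 1)) :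
    VanishesOnOddPowers (shiftSum (y - 1) τ Q) μ := by
  refine .of_centralDifference fun k hk => ?_
  calc shiftSum (y - 1) τ Q ((T + 1) ^ (2 * k) - (T - 1) ^ (2 * k))
      = -shiftSum y τ ((T ^ 2 - 1) * Q) (T ^ (2 * k)) := by
        rw [shiftSum_X_sq_sub_one_mul y hτ, X_pow_comp, X_pow_comp, ← map_neg, neg_sub]
    _ = -shiftSum y τ P (T ^ (2 * k + 1)) := by rw [← hQ, shiftSum_eulerOp, pow_succ']
    _ = 0 := by rw [h k (Nat.lt_succ_of_le hk), neg_zero]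

theorem natCast_ne_of_two_mul_ne_intCast {y : R} (hy : ∀ k : ℤ, 2 * y ≠ k) (s : ℕ) : y ≠ s := by
  rintro rfl
  exact hy (2 * s) (by push_cast; rfl)

theorem sub_natCast_sq_injective [IsDomain R] [CharZero R] {y : R} (hy : ∀ k : ℤ, 2 * y ≠ k) :
    Function.Injective fun s : ℕ => (y - s) ^ 2 := by
  intro s t hst
  rcases sq_eq_sq_iff_eq_or_eq_neg.1 hst with heq | hneg
  · exact Nat.cast_injective (sub_right_injective heq)
  · refine absurd ?_ (hy (s + t))
    push_cast
    linear_combination hneg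

theorem eq_zero_of_vanishesOnOddPowers_single [IsDomain R] [CharZero R] {y τ : R}
    (hy : ∀ k : ℤ, 2 * y ≠ k) (hτ : τ ≠ 0) {μ : ℕ} {P : R[X]} (h0 : P.coeff 0 = 0)
    (hdeg : P.natDegree ≤ μ) (h : VanishesOnOddPowers (shiftSum y τ P) μ) : P = 0 := by
  have hinj : Function.Injective fun j : Fin μ => (y - ((j + 1 : ℕ) : R)) ^ 2 :=
    (sub_natCast_sq_injective hy).comp ((add_left_injective 1).comp Fin.val_injective)
  have hzero := Matrix.eq_zero_of_forall_pow_sum_mul_pow_eq_zero hinj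
    (v := fun j => P.coeff (j + 1) * (τ ^ (j + 1 : ℕ) * (y - ((j + 1 : ℕ) : R)))) fun k => by
      rw [← h k k.2, shiftSum_apply y τ (Nat.lt_succ_of_le hdeg), sum_range_succ', h0, zero_mul,
        add_zero, sum_range]
      refine sum_congr rfl fun j _ => ?_
      rw [Polynomial.eval_pow, Polynomial.eval_X, pow_succ _ (2 * (k : ℕ)), pow_mul]
      ring
  ext s
  rcases s with _ | s
  · exact h0
  · rcases lt_or_ge s μ with hs | hs
    · refine (mul_eq_zero.1 (congrFun hzero ⟨s, hs⟩)).resolve_right (mul_ne_zero ?_ ?_)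
      · exact pow_ne_zero _ hτ
      · exact sub_ne_zero.2 (natCast_ne_of_two_mul_ne_intCast hy _)
    · exact coeff_eq_zero_of_natDegree_lt (by omega)

end ShiftSum

section Existence

variable {K : Type*} [Field K] [CharZero K] {y : K}

theorem eq_zero_of_vanishesOnOddPowers (hy : ∀ k : ℤ, 2 * y ≠ k) {m n : ℕ}
    {P : K[X]} (h0 : P.coeff 0 = 0) (hdeg : P.natDegree ≤ m + n)
    (hm : VanishesOnOddPowers (shiftSum y 1 P) m)
    (hn : VanishesOnOddPowers (shiftSum y (-1) P) n) : P = 0 := by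
  induction n generalizing m y P with
  | zero => exact eq_zero_of_vanishesOnOddPowers_single hy one_ne_zero h0 hdeg hm
  | succ n ih =>
    cases m with
    | zero =>
      rw [zero_add] at hdeg
      exact eq_zero_of_vanishesOnOddPowers_single hy (neg_ne_zero.2 one_ne_zero) h0 hdeg hn
    | succ m =>
      obtain ⟨Q, hQ⟩ := X_sq_sub_one_dvd (isUnit_iff_ne_zero.2 two_ne_zero)
        (hm.isRoot_eulerOp m.succ_pos) (hn.isRoot_eulerOp n.succ_pos)
      have hy' (k : ℤ) : 2 * (y - 1) ≠ k := fun hk =>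
        hy (k + 2) (by push_cast; linear_combination hk)
      have hQ0 : Q.coeff 0 = 0 := by
        have hcoeff := congrArg (Polynomial.coeff · 0) hQ
        simpa [coeff_eulerOp, h0, mul_coeff_zero] using hcoeff
      have hQdeg : Q.natDegree ≤ m + n := by
        have hmonic : (T ^ 2 - Polynomial.C 1 : K[X]).Monic := monic_X_pow_sub_C 1 two_ne_zero
        have hle := natDegree_eulerOp_le y P
        rcases eq_or_ne Q 0 with rfl | hne
        · simp
        · rw [hQ, ← Polynomial.C_1, hmonic.natDegree_mul' hne, natDegree_X_pow_sub_C] at hle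
          omega
      have hQzero : Q = 0 := ih hy' hQ0 hQdeg (hm.of_eulerOp_eq (one_pow 2) hQ)
        (hn.of_eulerOp_eq neg_one_sq hQ)
      refine (eulerOp_eq_zero_iff (natCast_ne_of_two_mul_ne_intCast hy)).1 ?_
      rw [hQ, hQzero, mul_zero]

theorem exists_vanishesOnOddPowers (hy : ∀ k : ℤ, 2 * y ≠ k) (m n : ℕ) :
    ∃ P : K[X], P.coeff 0 = 1 ∧ P.natDegree ≤ m + n ∧
      VanishesOnOddPowers (shiftSum y 1 P) m ∧ VanishesOnOddPowers (shiftSum y (-1) P) n := by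
  let oddMoments (τ : K) (μ : ℕ) : K[X] →ₗ[K] Fin μ → K :=
    LinearMap.pi fun k => (shiftSum y τ).flip (T ^ (2 * (k : ℕ) + 1))
  have vanishes_of {τ : K} {μ : ℕ} {P : K[X]} (h : oddMoments τ μ P = 0) :
      VanishesOnOddPowers (shiftSum y τ P) μ := fun k hk => congrFun h ⟨k, hk⟩
  let L : degreeLT K (m + n + 1) →ₗ[K] K × (Fin m → K) × (Fin n → K) :=
    ((Polynomial.lcoeff K 0).prod ((oddMoments 1 m).prod (oddMoments (-1) n))) ∘ₗ
      Submodule.subtype _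
  have natDegree_le (P : degreeLT K (m + n + 1)) : (P : K[X]).natDegree ≤ m + n :=
    natDegree_le_iff_coeff_eq_zero.2 ((degree_lt_iff_coeff_zero _ _).1 (mem_degreeLT.1 P.2))
  have hinj : Function.Injective L := by
    refine (injective_iff_map_eq_zero L).2 fun P hP => ?_
    obtain ⟨h0, hmn⟩ := Prod.ext_iff.1 hP
    obtain ⟨hm, hn⟩ := Prod.ext_iff.1 hmn
    exact Subtype.ext (eq_zero_of_vanishesOnOddPowers hy h0 (natDegree_le P) (vanishes_of hm)
      (vanishes_of hn))
  have hfinrank : Module.finrank K (degreeLT K (m + n + 1)) =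
      Module.finrank K (K × (Fin m → K) × (Fin n → K)) := by
    rw [(degreeLTEquiv K (m + n + 1)).finrank_eq]
    simp only [Module.finrank_prod, Module.finrank_self, Module.finrank_fin_fun]
    ring
  have : FiniteDimensional K (degreeLT K (m + n + 1)) := (degreeLTEquiv K _).symm.finiteDimensional
  obtain ⟨P, hP⟩ :=
    (LinearMap.injective_iff_surjective_of_finrank_eq_finrank hfinrank).1 hinj (1, 0, 0)
  obtain ⟨h0, hmn⟩ := Prod.ext_iff.1 hP
  obtain ⟨hm, hn⟩ := Prod.ext_iff.1 hmn
  exact ⟨P, h0, natDegree_le P, vanishes_of hm, vanishes_of hn⟩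

end Existence

section Divisibility

theorem X_sub_one_pow_dvd_sum_iff {R : Type*} [CommRing R] {ι : Type*} (S : Finset ι) (c : ι → R)
    (A B : ι → ℕ) (n : ℕ) :
    (T - 1) ^ n ∣ ∑ s ∈ S, Polynomial.C (c s) * (T ^ A s - T ^ B s : R[X]) ↔
      ∀ k < n, ∑ s ∈ S, c s * ((A s).choose k - (B s).choose k : R) = 0 := by
  rw [← Polynomial.C_1, X_sub_C_pow_dvd_iff, X_pow_dvd_iff]
  simp only [Polynomial.sum_comp, mul_comp, sub_comp, C_comp, X_pow_comp, Polynomial.C_1,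
    Polynomial.finsetSum_coeff, Polynomial.coeff_C_mul, Polynomial.coeff_sub,
    coeff_X_add_one_pow]

theorem factorial_mul_choose_eq_eval_descPochhammer (R : Type*) [CommRing R] (a k : ℕ) :
    (k.factorial : R) * a.choose k = (descPochhammer R k).eval (a : R) := by
  rw [descPochhammer_eval_eq_descFactorial, Nat.descFactorial_eq_factorial_mul_choose,
    Nat.cast_mul]

variable {K : Type*} [Field K] [CharZero K]

theorem X_sub_one_pow_dvd_of_vanishesOnOddPowers {y τ : K} {P : K[X]} {N M D μ : ℕ}
    (hD : (D : K) = 2 * N * y) (hM : N * M ≤ D) (hP : P.natDegree ≤ M)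
    (h : VanishesOnOddPowers (shiftSum y τ P) μ) :
    (T - 1) ^ (2 * μ + 1) ∣ ∑ s ∈ range (M + 1),
      Polynomial.C (P.coeff s * τ ^ s) * (T ^ (D - N * s) - T ^ (N * s) : K[X]) := by
  rw [X_sub_one_pow_dvd_sum_iff]
  intro k hk
  let F : K[X] := (descPochhammer K k).comp (Polynomial.C (N : K) * (T + Polynomial.C y))
  have hF : F.natDegree < 2 * μ + 1 := by
    refine lt_of_le_of_lt (natDegree_comp_le.trans ?_) hk
    rw [descPochhammer_natDegree]
    exact mul_le_of_le_one_right k.zero_le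
      ((natDegree_C_mul_le _ _).trans (natDegree_X_add_C y).le)
  have hodd := h.apply_sub_comp_neg_X hF
  rw [shiftSum_apply y τ (Nat.lt_succ_of_le hP)] at hodd
  refine (mul_eq_zero.1 ?_).resolve_left (Nat.cast_ne_zero.2 k.factorial_ne_zero)
  rw [← hodd, mul_sum]
  refine sum_congr rfl fun s hs => ?_
  have hs : N * s ≤ D :=
    (Nat.mul_le_mul_left N (Nat.lt_succ_iff.1 (mem_range.1 hs))).trans hM
  have hA : F.eval (y - s) = (k.factorial : K) * (D - N * s).choose k := by
    rw [factorial_mul_choose_eq_eval_descPochhammer, Nat.cast_sub hs, hD]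
    simp only [F, eval_comp, Polynomial.eval_mul, Polynomial.eval_add, Polynomial.eval_C,
      Polynomial.eval_X]
    push_cast
    ring_nf
  have hB : (F.comp (-T)).eval (y - s) = (k.factorial : K) * (N * s).choose k := by
    rw [factorial_mul_choose_eq_eval_descPochhammer]
    simp only [F, eval_comp, Polynomial.eval_mul, Polynomial.eval_add, Polynomial.eval_C,
      Polynomial.eval_X, Polynomial.eval_neg]
    push_cast
    ring_nf
  rw [Polynomial.eval_sub, hA, hB]
  ring

theorem homogenize_X_sub_one_pow {R : Type*} [CommRing R] (n : ℕ) :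
    ((T - 1 : R[X]) ^ n).homogenize n = (MvPolynomial.X 0 - MvPolynomial.X 1) ^ n := by
  refine homogenize_eq_of_isHomogeneous ?_ ?_
  · simpa using (((isHomogeneous_X R (0 : Fin 2)).sub (isHomogeneous_X R 1)).pow n)
  · simp

theorem sub_pow_dvd_aeval_homogenize {R S : Type*} [CommRing R] [Nontrivial R]
    [CommRing S] [Algebra R S] {p : R[X]} {k D : ℕ} (hp : p.natDegree ≤ D)
    (h : (T - 1) ^ k ∣ p) (Z W : S) :
    (Z - W) ^ k ∣ MvPolynomial.aeval ![Z, W] (p.homogenize D) := by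
  obtain ⟨q, rfl⟩ := h
  rcases eq_or_ne q 0 with rfl | hq
  · simp
  have hmonic : ((T - 1 : R[X]) ^ k).Monic := by
    simpa using (monic_X_sub_C (1 : R)).pow k
  have hdeg : ((T - 1 : R[X]) ^ k).natDegree = k := by
    rw [← Polynomial.C_1, (monic_X_sub_C (1 : R)).natDegree_pow, natDegree_X_sub_C, mul_one]
  rw [hmonic.natDegree_mul' hq, hdeg] at hp
  obtain ⟨l, rfl⟩ := Nat.exists_eq_add_of_le ((Nat.le_add_right _ _).trans hp)
  rw [homogenize_mul _ _ hdeg.le (Nat.le_of_add_le_add_left hp), homogenize_X_sub_one_pow, map_mul]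
  simp

theorem sub_pow_dvd_of_vanishesOnOddPowers {S : Type*} [CommRing S] [Algebra K S] {y τ : K}
    {P : K[X]} {N M D μ : ℕ} (hD : (D : K) = 2 * N * y) (hM : N * M ≤ D)
    (hP : P.natDegree ≤ M) (h : VanishesOnOddPowers (shiftSum y τ P) μ) (Z W : S) :
    (Z - W) ^ (2 * μ + 1) ∣ ∑ s ∈ range (M + 1), algebraMap K S (P.coeff s * τ ^ s) *
      (Z ^ (D - N * s) * W ^ (N * s) - Z ^ (N * s) * W ^ (D - N * s)) := by
  have hle {s : ℕ} (hs : s ∈ range (M + 1)) : N * s ≤ D :=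
    (Nat.mul_le_mul_left N (Nat.lt_succ_iff.1 (mem_range.1 hs))).trans hM
  have hdvd := sub_pow_dvd_aeval_homogenize (D := D) ?_
    (X_sub_one_pow_dvd_of_vanishesOnOddPowers hD hM hP h) Z W
  · rw [homogenize_finsetSum, map_sum] at hdvd
    convert hdvd using 1
    refine sum_congr rfl fun s hs => ?_
    rw [homogenize_C_mul, homogenize_sub, homogenize_X_pow (Nat.sub_le _ _),
      homogenize_X_pow (hle hs), Nat.sub_sub_self (hle hs)]
    simp
  · refine natDegree_sum_le_of_forall_le _ _ fun s hs => (natDegree_C_mul_le _ _).trans ?_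
    refine (natDegree_sub_le _ _).trans (max_le ?_ ?_)
    · exact (natDegree_X_pow_le _).trans (Nat.sub_le _ _)
    · exact (natDegree_X_pow_le _).trans (hle hs)

end Divisibility

section QuasiInvariance

theorem isQuasiInv_sum_of_vanishesOnOddPowers {N m n M i : ℕ} {y : ℚ} {P : ℚ[X]}
    (hy : ((M * N + i : ℕ) : ℚ) = 2 * N * y) (hP : P.natDegree ≤ M)
    (hm : VanishesOnOddPowers (shiftSum y 1 P) m)
    (hn : VanishesOnOddPowers (shiftSum y (-1) P) n) :
    IsQuasiInv N m n (∑ s ∈ range (M + 1),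
      MvPolynomial.C (P.coeff s : ℂ) * zP ^ ((M - s) * N + i) * wP ^ (N * s)) := by
  intro j hj
  have hN : N ≠ 0 := by omega
  have hM : N * M ≤ M * N + i := by rw [mul_comm]; exact Nat.le_add_right _ _
  have hτ : VanishesOnOddPowers (shiftSum y ((-1) ^ j) P) (mult m n j) := by
    rcases j.even_or_odd with hj | hj
    · simpa only [mult, if_pos hj, hj.neg_one_pow] using hm
    · simpa only [mult, if_neg (Nat.not_even_iff_odd.2 hj), hj.neg_one_pow] using hn
  rw [dvd_sub_comm]
  convert sub_pow_dvd_of_vanishesOnOddPowers hy hM hP hτ zP (MvPolynomial.C (eps N ^ j) * wP)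
    using 1
  rw [map_sum, ← sum_sub_distrib]
  refine sum_congr rfl fun s hs => ?_
  have hexp : M * N + i - N * s = (M - s) * N + i := by
    have hs := Nat.mul_le_mul_right N (Nat.lt_succ_iff.1 (mem_range.1 hs))
    rw [Nat.sub_mul, mul_comm N]
    omega
  have hpow : (eps N ^ j) ^ (N * s) = ((-1) ^ j) ^ s := by rw [pow_mul, eps_pow_pow_self hN]
  have hsq : (((-1 : ℂ) ^ j) ^ s) ^ 2 = 1 := by
    rw [pow_right_comm _ s, pow_right_comm _ j, neg_one_sq, one_pow, one_pow]
  rw [hexp, sub_dihRefl_C_mul_zP_pow_mul_wP_pow hsq hpow, IsScalarTower.algebraMap_apply ℚ ℂ R2,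
    eq_ratCast, MvPolynomial.algebraMap_eq]
  push_cast
  rfl

end QuasiInvariance

end DihedralQuasiInvariants

open DihedralQuasiInvariants in
theorem exists_quasiInvariants_q1i_q2i_general (N m n : ℕ) (hN : 1 ≤ N) (i : ℕ) (hi : ¬ N ∣ i) :
    ∃ a : ℕ → ℚ, a 0 = 1 ∧
      IsQuasiInv N m n
        (∑ s ∈ Finset.range (m + n + 1),
          C (a s : ℂ) * zP ^ ((m + n - s) * N + i) * wP ^ (N * s)) ∧
      IsQuasiInv N m n
        (∑ s ∈ Finset.range (m + n + 1),
          C (a s : ℂ) * wP ^ ((m + n - s) * N + i) * zP ^ (N * s)) := by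
  have hN0 : N ≠ 0 := Nat.one_le_iff_ne_zero.1 hN
  obtain ⟨y, hy⟩ : ∃ y : ℚ, (((m + n) * N + i : ℕ) : ℚ) = 2 * N * y :=
    ⟨_, (mul_div_cancel₀ _ (mul_ne_zero two_ne_zero (Nat.cast_ne_zero.2 hN0))).symm⟩
  have hy_half_int (k : ℤ) : 2 * y ≠ k := by
    intro hk
    have hcast : ((m + n) * N + i : ℤ) = N * k := by
      have : (((m + n) * N + i : ℕ) : ℚ) = N * k := by rw [hy, ← hk]; ring
      exact_mod_cast this
    refine hi (Int.natCast_dvd_natCast.1 ⟨k - (m + n), ?_⟩)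
    linear_combination hcast
  obtain ⟨P, hP0, hPdeg, hm, hn⟩ := exists_vanishesOnOddPowers hy_half_int m n
  have hq := isQuasiInv_sum_of_vanishesOnOddPowers hy hPdeg hm hn
  refine ⟨P.coeff, hP0, hq, ?_⟩
  simpa only [map_sum, map_mul, map_pow, dihRefl_C, dihRefl_zero_zP, dihRefl_zero_wP]
    using hq.dihRefl_zero

theorem exists_quasiInvariants_q1i_q2i (N m n : ℕ) (hN : 1 ≤ N) (hnm : n ≤ m) :
    ∀ i : ℕ, 1 ≤ i → i ≤ 2 * N - 1 → i ≠ N →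
      ∃ a : ℕ → ℂ, a 0 = 1 ∧
        IsQuasiInv N m n
          (∑ s ∈ Finset.range (m + n + 1),
            C (a s) * zP ^ ((m + n - s) * N + i) * wP ^ (N * s)) ∧
        IsQuasiInv N m n
          (∑ s ∈ Finset.range (m + n + 1),
            C (starRingEnd ℂ (a s)) * wP ^ ((m + n - s) * N + i) * zP ^ (N * s)) := by
  intro i hi hi2 hiN
  have hndvd : ¬ N ∣ i := by
    rintro ⟨k, rfl⟩
    have hk2 : k < 2 := Nat.lt_of_mul_lt_mul_left (a := N) (by omega)
    interval_cases k
    · simp at hi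
    · simp at hiN
  obtain ⟨a, ha0, hq₁, hq₂⟩ := exists_quasiInvariants_q1i_q2i_general N m n hN i hndvd
  exact ⟨fun s => a s, by simp [ha0], hq₁, by simpa only [map_ratCast] using hq₂⟩
end
end

section
/- Assume n ≤ m and let i be an integer with 1 ≤ i ≤ 2N−1 and i ≠ N. Then the (m+n)×(m+n) complex matrix A₁ (obtained from the matrix A = A(i) by deleting its row 0 and column 0) has nonzero determinant: det A₁ ≠ 0. -/
open MvPolynomial Finset

noncomputable section

/-- `cₛ = (m+n−2s)·N + i`, as a complex number. -/
def cVal (N m n i s : ℕ) : ℂ := ((m : ℂ) + n - 2 * s) * N + i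

/-- The scalar entry of the matrix `A = A(i)` in row `t ≥ 1` and column `s` (both `0`-based):
rows `1,…,n` have entries `cₛ^{2t−1}` at even `s` and `0` at odd `s`;
rows `n+1,…,2n` have entries `cₛ^{2(t−n)−1}` at odd `s` and `0` at even `s`;
rows `2n+1,…,n+m` have entries `cₛ^{2(t−n)−1}`. -/
def Aentry (N m n i : ℕ) (t s : ℕ) : ℂ :=
  if t ≤ n then (if Even s then cVal N m n i s ^ (2 * t - 1) else 0)
  else if t ≤ 2 * n then (if ¬ Even s then cVal N m n i s ^ (2 * (t - n) - 1) else 0)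
  else cVal N m n i s ^ (2 * (t - n) - 1)

/-- The matrix `A₁`: the matrix `A(i)` with row `0` and column `0` deleted. -/
def A1mat (N m n i : ℕ) : Matrix (Fin (m + n)) (Fin (m + n)) ℂ :=
  Matrix.of fun t s => Aentry N m n i ((t : ℕ) + 1) ((s : ℕ) + 1)

/-- The full `(m+n+1)×(m+n+1)` matrix `A = A(i)` over `R`: row `0` consists of the
monomials `z^{(m+n−s)N+i}·w^{Ns}`, the remaining rows are the scalar rows. -/
def Amat (N m n i : ℕ) : Matrix (Fin (m + n + 1)) (Fin (m + n + 1)) R2 :=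
  Matrix.of fun t s =>
    if (t : ℕ) = 0 then zP ^ ((m + n - (s : ℕ)) * N + i) * wP ^ (N * (s : ℕ))
    else C (Aentry N m n i (t : ℕ) (s : ℕ))

/-- The matrix `Ā`: `A` with row `0` replaced by the monomials `w^{(m+n−s)N+i}·z^{Ns}`. -/
def AmatBar (N m n i : ℕ) : Matrix (Fin (m + n + 1)) (Fin (m + n + 1)) R2 :=
  Matrix.of fun t s =>
    if (t : ℕ) = 0 then wP ^ ((m + n - (s : ℕ)) * N + i) * zP ^ (N * (s : ℕ))
    else C (Aentry N m n i (t : ℕ) (s : ℕ))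

/-!
Let `v` be in the kernel of `A₁` and put `F(u) = ∑ₛ vₛ exp (cₛ u)`. The rows of `A₁` say that the
first `m` odd moments of `v`, and the first `n` odd moments of the alternating vector
`(-1)ˢ vₛ`, vanish at the nodes `cₛ`, i.e. that `F`, respectively its alternating version, is even
to high order at `u = 0`. Hence the Wronskian of `F(-u)` and `F(u)`,
`∑ₛₜ vₛ vₜ (cₛ + cₜ) exp ((cₛ - cₜ) u)`, vanishes there to order `2 m`, respectively `2 n`. As the
nodes are in arithmetic progression, this Wronskian is, up to a monomial factor, a polynomial of
degree less than `2 (m + n)` in `x = exp (2 N u)`, and passing to the alternating vector replaces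
`x` by `-x`, up to sign. So it is divisible by `(x - 1) ^ (2 m) (x + 1) ^ (2 n)`, and hence zero.
But if `v ≠ 0`, its leading coefficient comes from a single pair of indices, the first `a` and the
last `b` in the support of `v`, and is `vₐ v_b (cₐ + c_b)`. This is nonzero, as
`cₐ + c_b` is congruent to `2 i` modulo `2 N` and `N` does not divide `i`.
-/

section Moments

variable {ι R : Type*} [Fintype ι] [CommRing R]

lemma sum_mul_eval_eq_zero {d : ℕ} {a x : ι → R} (h : ∀ k < d, ∑ i, a i * x i ^ k = 0)
    {q : Polynomial R} (hq : q.natDegree < d) : ∑ i, a i * q.eval (x i) = 0 := by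
  simp_rw [Polynomial.eval_eq_sum_range' hq, mul_sum]
  rw [sum_comm]
  refine sum_eq_zero fun k hk => ?_
  simp_rw [mul_left_comm _ (q.coeff k), ← mul_sum, h k (mem_range.1 hk), mul_zero]

lemma sum_mul_sub_pow_eq_sum_moments (c v : ι → R) (k : ℕ) :
    ∑ p : ι × ι, v p.1 * v p.2 * (c p.1 * (c p.1 - c p.2) ^ k) =
      ∑ j ∈ range (k + 1), (-1) ^ (k - j) * k.choose j *
        ((∑ s, v s * c s ^ (j + 1)) * ∑ t, v t * c t ^ (k - j)) := by
  simp_rw [Fintype.sum_mul_sum, ← Fintype.sum_prod_type', mul_sum]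
  rw [sum_comm]
  refine sum_congr rfl fun p _ => ?_
  rw [sub_eq_add_neg, add_pow, mul_sum, mul_sum]
  refine sum_congr rfl fun j _ => ?_
  rw [neg_pow (c p.2)]
  ring

lemma sum_mul_sub_pow_eq_zero_of_even {d k : ℕ} {c v : ι → R}
    (h : ∀ j < d, ∑ s, v s * c s ^ (2 * j + 1) = 0) (hk : k < 2 * d) (hk_even : Even k) :
    ∑ p : ι × ι, v p.1 * v p.2 * (c p.1 * (c p.1 - c p.2) ^ k) = 0 := by
  have moment_eq_zero {a : ℕ} (ha : Odd a) (had : a < 2 * d) : ∑ s, v s * c s ^ a = 0 := by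
    obtain ⟨j, rfl⟩ := ha
    exact h j (by omega)
  rw [sum_mul_sub_pow_eq_sum_moments]
  refine sum_eq_zero fun j hj => ?_
  have hjk : j ≤ k := mem_range_succ_iff.1 hj
  rcases Nat.even_or_odd j with hj_even | hj_odd
  · rw [moment_eq_zero hj_even.add_one (by grind), zero_mul, mul_zero]
  · rw [moment_eq_zero (Nat.Even.sub_odd hjk hk_even hj_odd) (by omega), mul_zero, mul_zero]

lemma sum_mul_add_mul_sub_pow_eq_zero {d k : ℕ} {c v : ι → R}
    (h : ∀ j < d, ∑ s, v s * c s ^ (2 * j + 1) = 0) (hk : k < 2 * d) :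
    ∑ p : ι × ι, v p.1 * v p.2 * (c p.1 + c p.2) * (c p.1 - c p.2) ^ k = 0 := by
  set S := ∑ p : ι × ι, v p.1 * v p.2 * (c p.1 * (c p.1 - c p.2) ^ k) with hS
  have swap : ∑ p : ι × ι, v p.1 * v p.2 * (c p.2 * (c p.1 - c p.2) ^ k) = (-1) ^ k * S := by
    rw [hS, mul_sum, ← (Equiv.prodComm ι ι).sum_comp]
    refine sum_congr rfl fun p _ => ?_
    simp only [Equiv.prodComm_apply, Prod.fst_swap, Prod.snd_swap]
    rw [← neg_sub (c p.1) (c p.2), neg_pow]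
    ring
  have split : ∑ p : ι × ι, v p.1 * v p.2 * (c p.1 + c p.2) * (c p.1 - c p.2) ^ k =
      S + (-1) ^ k * S := by
    rw [← swap, hS, ← sum_add_distrib]
    exact sum_congr rfl fun p _ => by ring
  rw [split]
  rcases Nat.even_or_odd k with hk_even | hk_odd
  · rw [hS, sum_mul_sub_pow_eq_zero_of_even h hk hk_even, mul_zero, add_zero]
  · rw [hk_odd.neg_one_pow, neg_one_mul, add_neg_cancel]

end Moments

lemma X_sub_C_pow_dvd_sum_monomial {ι R : Type*} [Fintype ι] [CommRing R] [IsDomain R]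
    [CharZero R] {d : ℕ} {a : ι → R} {e : ι → ℕ} {r : R} (hr : r ≠ 0)
    (h : ∀ k < d, ∑ i, a i * r ^ e i * (e i : R) ^ k = 0) :
    (Polynomial.X - Polynomial.C r) ^ d ∣ ∑ i, Polynomial.monomial (e i) (a i) := by
  rw [Polynomial.X_sub_C_pow_dvd_iff, ← Polynomial.taylor_apply, Polynomial.X_pow_dvd_iff]
  intro k hk
  have hscale : (k.factorial : R) * r ^ k ≠ 0 :=
    mul_ne_zero (Nat.cast_ne_zero.2 k.factorial_ne_zero) (pow_ne_zero k hr)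
  have hterm (i : ι) : (k.factorial : R) * r ^ k * ((e i).choose k * a i * r ^ (e i - k)) =
      a i * r ^ e i * (descPochhammer R k).eval (e i : R) := by
    rw [descPochhammer_eval_eq_descFactorial, Nat.descFactorial_eq_factorial_mul_choose,
      Nat.cast_mul]
    rcases le_or_gt k (e i) with hki | hki
    · rw [← pow_mul_pow_sub r hki]
      ring
    · simp [Nat.choose_eq_zero_of_lt hki]
  refine (mul_eq_zero.1 ?_).resolve_left hscale
  rw [Polynomial.taylor_coeff]
  simp only [map_sum, Polynomial.eval_finsetSum,
    Polynomial.hasseDeriv_monomial, Polynomial.eval_monomial, mul_sum, hterm]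
  exact sum_mul_eval_eq_zero h (by rwa [descPochhammer_natDegree])

/-- The Wronskian `∑ₛₜ vₛ vₜ (cₛ + cₜ) exp ((cₛ - cₜ) u)` of `F(-u)` and `F(u)`, where
`F(u) = ∑ₛ vₛ exp (cₛ u)`, for nodes `cₛ = α + β s`: a Laurent polynomial in `exp (-β u)`, here
multiplied by the `(M - 1)`-st power of the variable to make it a polynomial. -/
def reflWronskian {R : Type*} [CommRing R] {M : ℕ} (c v : Fin M → R) : Polynomial R :=
  ∑ p : Fin M × Fin M,
    Polynomial.monomial ((p.2 : ℕ) + (p.1.rev : ℕ)) (v p.1 * v p.2 * (c p.1 + c p.2))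

lemma degree_reflWronskian_lt {R : Type*} [CommRing R] {M : ℕ} (c v : Fin M → R) :
    (reflWronskian c v).degree < (2 * M : ℕ) := by
  refine Polynomial.mem_degreeLT.1 (Submodule.sum_mem _ fun p _ => Polynomial.mem_degreeLT.2 ?_)
  exact (Polynomial.degree_monomial_le _ _).trans_lt (Nat.cast_lt.2 (by omega))

lemma eq_zero_of_reflWronskian_eq_zero {R : Type*} [CommRing R] [IsDomain R] {M : ℕ}
    {c v : Fin M → R} (hc : ∀ s t, c s + c t ≠ 0) (hW : reflWronskian c v = 0) : v = 0 := by
  classical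
  by_contra hv
  obtain ⟨s₀, hs₀⟩ := Function.ne_iff.1 hv
  have support_nonempty : ({s | v s ≠ 0} : Finset (Fin M)).Nonempty := ⟨s₀, by simpa using hs₀⟩
  obtain ⟨a, ha, ha_min⟩ := exists_min_image _ id support_nonempty
  obtain ⟨b, hb, hb_max⟩ := exists_max_image _ id support_nonempty
  simp only [mem_filter, mem_univ, true_and, id_eq] at ha hb ha_min hb_max
  have top_coeff :
      (reflWronskian c v).coeff ((b : ℕ) + (a.rev : ℕ)) = v a * v b * (c a + c b) := by
    simp only [reflWronskian, Polynomial.finsetSum_coeff, Polynomial.coeff_monomial]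
    refine (sum_eq_single (a, b) (fun p _ hp => ?_) (by simp)).trans (if_pos rfl)
    rw [ite_eq_right_iff]
    intro hexp
    by_contra hne
    have hp₁ : a ≤ p.1 := ha_min _ fun h => hne (by simp [h])
    have hp₂ : p.2 ≤ b := hb_max _ fun h => hne (by simp [h])
    simp only [Fin.val_rev, Fin.le_def] at hexp hp₁ hp₂
    exact hp (Prod.ext (show p.1 = a by omega) (show p.2 = b by omega))
  rw [hW, Polynomial.coeff_zero] at top_coeff
  exact mul_ne_zero (mul_ne_zero ha hb) (hc a b) top_coeff.symm

section Field

variable {F : Type*} [Field F] [CharZero F]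

lemma X_sub_C_pow_dvd_reflWronskian {M d : ℕ} {c v : Fin M → F} {α β r : F} (hβ : β ≠ 0)
    (hc : ∀ s, c s = α + β * (s : ℕ)) (hr : r ^ 2 = 1)
    (h : ∀ j < d, ∑ s : Fin M, r ^ (s : ℕ) * v s * c s ^ (2 * j + 1) = 0) :
    (Polynomial.X - Polynomial.C r) ^ (2 * d) ∣ reflWronskian c v := by
  have hr₀ : r ≠ 0 := by rintro rfl; simp at hr
  refine X_sub_C_pow_dvd_sum_monomial hr₀ fun k hk => ?_
  let q : Polynomial F := (Polynomial.C (-β⁻¹) * Polynomial.X + Polynomial.C ((M : F) - 1)) ^ k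
  have hq : q.natDegree < 2 * d :=
    (Polynomial.natDegree_pow_le_of_le k Polynomial.natDegree_linear_le).trans_lt (by simpa)
  have sum_eval_eq_zero := sum_mul_eval_eq_zero
    (fun l hl => sum_mul_add_mul_sub_pow_eq_zero h (k := l) hl) hq
  have cast_rev (s : Fin M) : ((s.rev : ℕ) : F) = (M : F) - 1 - (s : ℕ) := by
    rw [Fin.val_rev, Nat.cast_sub s.2]
    push_cast
    ring
  have eval_q (p : Fin M × Fin M) :
      q.eval (c p.1 - c p.2) = (((p.2 : ℕ) + (p.1.rev : ℕ) : ℕ) : F) ^ k := by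
    simp only [q, Polynomial.eval_pow, Polynomial.eval_add, Polynomial.eval_mul,
      Polynomial.eval_C, Polynomial.eval_X, hc, Nat.cast_add, cast_rev]
    congr 1
    linear_combination ((p.2 : ℕ) - (p.1 : ℕ) : F) * inv_mul_cancel₀ hβ
  have pow_rev (s : Fin M) : r ^ (s.rev : ℕ) = r ^ (M - 1) * r ^ (s : ℕ) := by
    rw [show M - 1 = s.rev + s by rw [Fin.val_rev]; omega, pow_add, mul_assoc, ← mul_pow, ← sq,
      hr, one_pow, mul_one]
  rw [← mul_zero (r ^ (M - 1)), ← sum_eval_eq_zero, mul_sum]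
  refine sum_congr rfl fun p _ => ?_
  rw [eval_q, pow_add, pow_rev]
  ring

lemma reflWronskian_eq_zero {m n : ℕ} {c v : Fin (m + n) → F} {α β : F} (hβ : β ≠ 0)
    (hc : ∀ s, c s = α + β * (s : ℕ))
    (h : ∀ j < m, ∑ s, v s * c s ^ (2 * j + 1) = 0)
    (h_alt : ∀ j < n, ∑ s : Fin (m + n), (-1) ^ (s : ℕ) * v s * c s ^ (2 * j + 1) = 0) :
    reflWronskian c v = 0 := by
  have dvd_one := X_sub_C_pow_dvd_reflWronskian (r := 1) (d := m) hβ hc (one_pow 2)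
    (by simpa only [one_pow, one_mul] using h)
  have dvd_neg_one := X_sub_C_pow_dvd_reflWronskian (r := -1) hβ hc neg_one_sq h_alt
  have coprime : IsCoprime (Polynomial.X - Polynomial.C (1 : F))
      (Polynomial.X - Polynomial.C (-1)) :=
    Polynomial.isCoprime_X_sub_C_of_isUnit_sub (IsUnit.mk0 _ (by norm_num))
  refine Polynomial.eq_zero_of_dvd_of_degree_lt (coprime.pow.mul_dvd dvd_one dvd_neg_one) ?_
  convert degree_reflWronskian_lt c v using 1
  rw [Polynomial.degree_mul, Polynomial.degree_pow, Polynomial.degree_pow,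
    Polynomial.degree_X_sub_C, Polynomial.degree_X_sub_C, nsmul_one, nsmul_one, mul_add,
    Nat.cast_add]

theorem eq_zero_of_odd_moments_eq_zero {m n : ℕ} {c v : Fin (m + n) → F} {α β : F}
    (hβ : β ≠ 0) (hc : ∀ s, c s = α + β * (s : ℕ)) (hcc : ∀ s t, c s + c t ≠ 0)
    (h : ∀ j < m, ∑ s, v s * c s ^ (2 * j + 1) = 0)
    (h_alt : ∀ j < n, ∑ s : Fin (m + n), (-1) ^ (s : ℕ) * v s * c s ^ (2 * j + 1) = 0) :
    v = 0 :=
  eq_zero_of_reflWronskian_eq_zero hcc (reflWronskian_eq_zero hβ hc h h_alt)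

end Field

section Matrix

variable {N m n i : ℕ}

lemma cVal_add_cVal_ne_zero (hi : ¬ N ∣ i) (s t : ℕ) :
    cVal N m n i s + cVal N m n i t ≠ 0 := by
  intro h
  have hmul : ((i : ℤ) : ℂ) = ((N * (s + t - m - n) : ℤ) : ℂ) := by
    unfold cVal at h
    push_cast
    linear_combination h / 2
  exact hi (Int.natCast_dvd_natCast.1 ⟨_, Int.cast_injective hmul⟩)

lemma Aentry_of_lt {t : ℕ} (ht : t < n) (s : ℕ) :
    Aentry N m n i (t + 1) s = if Even s then cVal N m n i s ^ (2 * t + 1) else 0 := by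
  rw [Aentry, if_pos (by omega), show 2 * (t + 1) - 1 = 2 * t + 1 by omega]

lemma Aentry_add_of_lt {t : ℕ} (ht : t < n) (s : ℕ) :
    Aentry N m n i (n + t + 1) s = if Even s then 0 else cVal N m n i s ^ (2 * t + 1) := by
  rw [Aentry, if_neg (by omega), if_pos (by omega), ite_not,
    show 2 * (n + t + 1 - n) - 1 = 2 * t + 1 by omega]

lemma Aentry_add_Aentry_of_lt {t : ℕ} (ht : t < n) (s : ℕ) :
    Aentry N m n i (t + 1) s + Aentry N m n i (n + t + 1) s = cVal N m n i s ^ (2 * t + 1) := by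
  rw [Aentry_of_lt ht, Aentry_add_of_lt ht]
  split_ifs <;> simp

lemma Aentry_sub_Aentry_of_lt {t : ℕ} (ht : t < n) (s : ℕ) :
    Aentry N m n i (t + 1) s - Aentry N m n i (n + t + 1) s =
      (-1) ^ s * cVal N m n i s ^ (2 * t + 1) := by
  rw [Aentry_of_lt ht, Aentry_add_of_lt ht]
  split_ifs with hs
  · simp [hs.neg_one_pow]
  · simp [(Nat.not_even_iff_odd.1 hs).neg_one_pow]

lemma Aentry_add_of_le {t : ℕ} (ht : n ≤ t) (s : ℕ) :
    Aentry N m n i (n + t + 1) s = cVal N m n i s ^ (2 * t + 1) := by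
  rw [Aentry, if_neg (by omega), if_neg (by omega),
    show 2 * (n + t + 1 - n) - 1 = 2 * t + 1 by omega]

variable {v : Fin (m + n) → ℂ}

lemma sum_Aentry_mul_eq_zero (hv : (A1mat N m n i).mulVec v = 0) {t : ℕ} (ht : t < m + n) :
    ∑ s : Fin (m + n), Aentry N m n i (t + 1) (s + 1) * v s = 0 :=
  congrFun hv ⟨t, ht⟩

lemma sum_mul_cVal_pow_eq_zero (hv : (A1mat N m n i).mulVec v = 0) {t : ℕ} (ht : t < m) :
    ∑ s : Fin (m + n), v s * cVal N m n i (s + 1) ^ (2 * t + 1) = 0 := by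
  rcases lt_or_ge t n with htn | hnt
  · simp_rw [← Aentry_add_Aentry_of_lt htn, mul_comm (v _), add_mul, sum_add_distrib]
    rw [sum_Aentry_mul_eq_zero hv (by omega), sum_Aentry_mul_eq_zero hv (by omega), add_zero]
  · simp_rw [← Aentry_add_of_le hnt, mul_comm (v _)]
    exact sum_Aentry_mul_eq_zero hv (by omega)

lemma sum_neg_one_pow_mul_cVal_pow_eq_zero (hnm : n ≤ m) (hv : (A1mat N m n i).mulVec v = 0)
    {t : ℕ} (ht : t < n) :
    ∑ s : Fin (m + n), (-1) ^ (s : ℕ) * v s * cVal N m n i (s + 1) ^ (2 * t + 1) = 0 := by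
  have hterm (s : Fin (m + n)) : (-1) ^ (s : ℕ) * v s * cVal N m n i (s + 1) ^ (2 * t + 1) =
      Aentry N m n i (n + t + 1) (s + 1) * v s - Aentry N m n i (t + 1) (s + 1) * v s := by
    rw [← sub_mul, ← neg_sub, Aentry_sub_Aentry_of_lt ht]
    ring
  simp_rw [hterm, sum_sub_distrib]
  rw [sum_Aentry_mul_eq_zero hv (by omega), sum_Aentry_mul_eq_zero hv (by omega), sub_zero]

end Matrix

theorem detA1_ne_zero_general (N m n i : ℕ) (hN : N ≠ 0) (hnm : n ≤ m) (hi : ¬ N ∣ i) :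
    (A1mat N m n i).det ≠ 0 := by
  intro hdet
  obtain ⟨v, hv_ne, hv⟩ := Matrix.exists_mulVec_eq_zero_iff.2 hdet
  have hc (s : Fin (m + n)) :
      cVal N m n i (s + 1) = (((m : ℂ) + n - 2) * N + i) + (-2 * N) * (s : ℕ) := by
    simp only [cVal]
    push_cast
    ring
  exact hv_ne <| eq_zero_of_odd_moments_eq_zero
    (mul_ne_zero (by norm_num) (Nat.cast_ne_zero.2 hN)) hc
    (fun s t => cVal_add_cVal_ne_zero hi _ _)
    (fun _ => sum_mul_cVal_pow_eq_zero hv)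
    (fun _ => sum_neg_one_pow_mul_cVal_pow_eq_zero hnm hv)

theorem detA1_ne_zero (N m n i : ℕ) (hN : 1 ≤ N) (hnm : n ≤ m)
    (hi1 : 1 ≤ i) (hi2 : i ≤ 2 * N - 1) (hiN : i ≠ N) :
    (A1mat N m n i).det ≠ 0 := by
  refine detA1_ne_zero_general N m n i (by omega) hnm ?_
  rintro ⟨k, rfl⟩
  have hk : k < 2 := Nat.lt_of_mul_lt_mul_left (a := N) (by omega)
  interval_cases k <;> omega
end
end
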